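/- Let n ≥ 1 and let ω = (ω₁, …, ω_n) be a tuple of positive natural numbers. For γ ∈ ℕⁿ define P(γ) = { −(γ_i + 1)/ω_i : 1 ≤ i ≤ n } ⊆ ℚ, and let G ⊆ ℕⁿ consist of the tuples k·e₁ for 0 ≤ k ≤ ω₁ − 1 together with the tuples k·e_i for 2 ≤ i ≤ n and 1 ≤ k ≤ ω_i − 2 (where e_i is the i-th standard basis vector). Then ⋃_{γ ∈ G} P(γ) = { −j/ω_i : 1 ≤ i ≤ n, 1 ≤ j ≤ ω_i }. -/

import Mathlib

/-!
The root `-j / ω i` is the `i`-th pole of any exponent `γ` with `γ i + 1 = j`, for instance of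
`(j - 1) e_i`. For `i ≠ i₀` two values of `j` need no exponent along `e_i`: `j = 1` is served by
`γ = 0`, and `j = ω i` gives the root `-1`, which is shared by all indices and therefore already a
pole of `(ω i₀ - 1) e_{i₀}`. Conversely, an exponent with `γ i < ω i` for all `i` has no poles
other than roots.
-/

section MonomialZetaFunction

variable {ι : Type*} (K : Type*) [DivisionRing K]

/-- The set `P(γ)` of poles of the topological zeta function of the monomial ideal `(x ^ ω)` and
the volume form `x ^ γ dx`, given by its explicit formula. The poles are rational; they are taken
in an arbitrary division ring `K`. -/
def monomialPoles (ω γ : ι → ℕ) : Set K :=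
  {q | ∃ i, q = -((γ i : K) + 1) / (ω i : K)}

/-- The set of roots of the Bernstein–Sato polynomial of the monomial ideal `(x ^ ω)`, given by
its explicit formula and taken in a division ring `K`. -/
def monomialBernsteinSatoRoots (ω : ι → ℕ) : Set K :=
  {q | ∃ i, ∃ j : ℕ, 1 ≤ j ∧ j ≤ ω i ∧ q = -(j : K) / (ω i : K)}

/-- The family `G` of exponents of volume forms whose poles exhaust the Bernstein–Sato roots of
`(x ^ ω)`; the distinguished index `i₀` plays the role of the first variable. If `ω i ≤ 2`, the
truncated subtraction `ω i - 2` is `0`, so an index `i ≠ i₀` then contributes no exponent, as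
intended. -/
def realizingExponents [DecidableEq ι] (i₀ : ι) (ω : ι → ℕ) : Set (ι → ℕ) :=
  {γ | (∃ k : ℕ, k ≤ ω i₀ - 1 ∧ γ = Pi.single i₀ k) ∨
    ∃ i, i ≠ i₀ ∧ ∃ k : ℕ, 1 ≤ k ∧ k ≤ ω i - 2 ∧ γ = Pi.single i k}

variable {ω γ : ι → ℕ}

theorem monomialPoles_subset_bernsteinSatoRoots (hγ : ∀ i, γ i < ω i) :
    monomialPoles K ω γ ⊆ monomialBernsteinSatoRoots K ω := by
  rintro _ ⟨i, rfl⟩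
  exact ⟨i, γ i + 1, Nat.le_add_left 1 _, hγ i, by rw [Nat.cast_succ]⟩

theorem neg_natCast_div_mem_monomialPoles {i : ι} {j : ℕ} (h : γ i + 1 = j) :
    -(j : K) / (ω i : K) ∈ monomialPoles K ω γ :=
  ⟨i, by rw [← h, Nat.cast_succ]⟩

theorem neg_one_mem_monomialPoles {i : ι} (hω : (ω i : K) ≠ 0) (h : γ i + 1 = ω i) :
    (-1 : K) ∈ monomialPoles K ω γ := by
  simpa only [neg_div, div_self hω] using neg_natCast_div_mem_monomialPoles K (ω := ω) h

variable [DecidableEq ι] {i₀ : ι}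

theorem single_apply_lt {i : ι} {k : ℕ} (hω : ∀ j, 0 < ω j) (hk : k < ω i) (j : ι) :
    (Pi.single i k : ι → ℕ) j < ω j :=
  (Function.forall_update_iff (0 : ι → ℕ) fun j m ↦ m < ω j).2 ⟨hk, fun j _ ↦ hω j⟩ j

theorem apply_lt_of_mem_realizingExponents (hω : ∀ i, 0 < ω i)
    (hγ : γ ∈ realizingExponents i₀ ω) (i : ι) : γ i < ω i := by
  rcases hγ with ⟨k, hk, rfl⟩ | ⟨l, -, k, hk_pos, hk, rfl⟩
  · exact single_apply_lt hω (Nat.lt_of_le_pred (hω i₀) hk) i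
  · exact single_apply_lt hω (by omega) i

theorem exists_mem_realizingExponents_of_mem_bernsteinSatoRoots (i₀ : ι)
    (hω : ∀ i, (ω i : K) ≠ 0) {q : K} (hq : q ∈ monomialBernsteinSatoRoots K ω) :
    ∃ γ ∈ realizingExponents i₀ ω, q ∈ monomialPoles K ω γ := by
  obtain ⟨i, j, hj, hjω, rfl⟩ := hq
  have single_pole : -(j : K) / (ω i : K) ∈ monomialPoles K ω (Pi.single i (j - 1)) :=
    neg_natCast_div_mem_monomialPoles K (by rw [Pi.single_eq_same, Nat.sub_add_cancel hj])
  obtain rfl | hi := eq_or_ne i i₀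
  · exact ⟨_, .inl ⟨j - 1, Nat.sub_le_sub_right hjω 1, rfl⟩, single_pole⟩
  obtain rfl | rfl | ⟨hj_gt, hj_lt⟩ : j = 1 ∨ j = ω i ∨ 1 < j ∧ j < ω i := by omega
  · exact ⟨_, .inl ⟨0, Nat.zero_le _, rfl⟩, neg_natCast_div_mem_monomialPoles K (by simp)⟩
  · have : NeZero (ω i₀ : K) := ⟨hω i₀⟩
    have hω₀ : 0 < ω i₀ := NeZero.pos_of_neZero_natCast K
    rw [neg_div, div_self (hω i)]
    exact ⟨_, .inl ⟨ω i₀ - 1, le_rfl, rfl⟩,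
      neg_one_mem_monomialPoles K (hω i₀) (by rw [Pi.single_eq_same, Nat.sub_add_cancel hω₀])⟩
  · exact ⟨_, .inr ⟨i, hi, j - 1, by omega, by omega, rfl⟩, single_pole⟩

theorem stmt8_general (i₀ : ι) (hω : ∀ i, (ω i : K) ≠ 0) :
    ⋃ γ ∈ realizingExponents i₀ ω, monomialPoles K ω γ = monomialBernsteinSatoRoots K ω := by
  have (i : ι) : NeZero (ω i : K) := ⟨hω i⟩
  have hω_pos (i : ι) : 0 < ω i := NeZero.pos_of_neZero_natCast K
  refine (Set.iUnion₂_subset fun γ hγ ↦ ?_).antisymm fun q hq ↦ Set.mem_iUnion₂.2 ?_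
  · exact monomialPoles_subset_bernsteinSatoRoots K (apply_lt_of_mem_realizingExponents hω_pos hγ)
  · simpa only [exists_prop] using
      exists_mem_realizingExponents_of_mem_bernsteinSatoRoots K i₀ hω hq

end MonomialZetaFunction

theorem stmt8 (n : ℕ) (hn : 1 ≤ n) (ω : Fin n → ℕ) (hω : ∀ i, 1 ≤ ω i) :
    (⋃ γ ∈ {γ : Fin n → ℕ |
        (∃ k : ℕ, k ≤ ω ⟨0, hn⟩ - 1 ∧ γ = Pi.single ⟨0, hn⟩ k) ∨
        (∃ i : Fin n, i ≠ ⟨0, hn⟩ ∧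
          ∃ k : ℕ, 1 ≤ k ∧ k ≤ ω i - 2 ∧ γ = Pi.single i k)},
      {q : ℚ | ∃ i : Fin n, q = -((γ i : ℚ) + 1) / (ω i : ℚ)}) =
    {q : ℚ | ∃ i : Fin n, ∃ j : ℕ, 1 ≤ j ∧ j ≤ ω i ∧ q = -(j : ℚ) / (ω i : ℚ)} :=
  stmt8_general ℚ (⟨0, hn⟩ : Fin n) fun i ↦ Nat.cast_ne_zero.2 (Nat.one_le_iff_ne_zero.1 (hω i))
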